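/- Let Λ be a complete noetherian local ring whose residue field has characteristic p > 0, and let G be a finite p-group. If P is a finitely generated projective module over the group algebra Λ[G], then P, regarded as a Λ-module by restriction of scalars, is a free Λ-module whose rank is divisible by the order of G. -/

import Mathlib

universe u v

/-!
The augmentation `Λ[G] → Λ`, which is the counit of the bialgebra `Λ[G]`, is a local homomorphism,
so `Λ[G]` is a (noncommutative) local ring. Indeed `p` annihilates a simple `Λ[G]`-module `S` by
Nakayama's lemma, so the orbit of a nonzero element generates a finite elementary abelian `p`-group.
By counting orbits, `G` fixes a nonzero element of it, and `Λ[G]` acts on that element, hence on the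
whole of `S`, through the augmentation. An element with invertible augmentation therefore acts
invertibly on every simple module, so it lies in no maximal left ideal.

Over any local ring, a finitely generated projective module is free: the kernel of the map from a
free module given by a minimal generating set lies in the Jacobson radical of that free module, and
it has a complement, which must then be everything. A `Λ[G]`-basis `b` of `P` gives the `Λ`-basis
`g • b i`, indexed by `G × ι`.
-/

section ProjectiveOverLocal

theorem isDedekindFiniteMonoid_of_isLocalRing (A : Type*) [Ring A] [IsLocalRing A] :
    IsDedekindFiniteMonoid A where
  mul_eq_one_symm {a b} hab := by
    rcases IsLocalRing.isUnit_or_isUnit_of_add_one (add_sub_cancel (b * a) 1) with hu | hu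
    · refine hu.mul_left_cancel ?_
      rw [mul_one, mul_assoc, ← mul_assoc a, hab, one_mul]
    · have hmul : a * (1 - b * a) = 0 := by
        rw [mul_sub, mul_one, ← mul_assoc, hab, one_mul, sub_self]
      have ha : a = 0 := hu.mul_left_eq_zero.mp hmul
      rw [ha, zero_mul] at hab
      exact absurd hab zero_ne_one

variable {A : Type*} [Ring A]

theorem mem_jacobson_of_not_isUnit [IsLocalRing A] {a : A} (ha : ¬IsUnit a) :
    a ∈ Ring.jacobson A := by
  have := isDedekindFiniteMonoid_of_isLocalRing A
  rw [Ring.jacobson_eq_sInf_isMaximal, Submodule.mem_sInf]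
  intro M hM
  change Ideal.IsMaximal M at hM
  by_contra haM
  obtain ⟨b, m, hm, hbm⟩ := hM.exists_inv haM
  rcases IsLocalRing.isUnit_or_isUnit_of_add_one hbm with hu | hu
  · exact ha (isUnit_of_mul_isUnit_right hu)
  · exact hM.ne_top (Ideal.eq_top_of_isUnit_mem M hm hu)

variable {M P ι : Type*} [AddCommGroup M] [Module A M] [AddCommGroup P] [Module A P]

theorem mem_span_image_compl_of_isUnit [Fintype ι] {v : ι → M} {f : ι → A} {i : ι}
    (hf : ∑ j, f j • v j = 0) (hi : IsUnit (f i)) : v i ∈ Submodule.span A (v '' {i}ᶜ) := by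
  classical
  rw [← Submodule.smul_mem_iff_of_isUnit _ hi]
  rw [Fintype.sum_eq_add_sum_compl i] at hf
  rw [eq_neg_of_add_eq_zero_left hf]
  refine Submodule.neg_mem _ (Submodule.sum_mem _ fun j hj => Submodule.smul_mem _ _ ?_)
  exact Submodule.subset_span ⟨j, by simpa using hj, rfl⟩

theorem mem_jacobson_pi_of_forall_mem_jacobson [Finite ι] {f : ι → A}
    (hf : ∀ i, f i ∈ Ring.jacobson A) : f ∈ Module.jacobson A (ι → A) := by
  classical
  have := Fintype.ofFinite ι
  rw [pi_eq_sum_univ' f]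
  exact Submodule.sum_mem _ fun i _ =>
    Ring.jacobson_smul_top_le A _ (Submodule.smul_mem_smul (hf i) Submodule.mem_top)

variable (A M) in
theorem exists_surjective_ker_le_jacobson [IsLocalRing A] [Module.Finite A M] :
    ∃ (s : Finset M) (L : (s → A) →ₗ[A] M),
      Function.Surjective L ∧ LinearMap.ker L ≤ Module.jacobson A (s → A) := by
  obtain ⟨s, hcard, hspan⟩ :=
    (Module.Finite.fg_top (R := A) (M := M)).exists_span_finset_card_eq_spanFinrank
  refine ⟨s, Fintype.linearCombination A ((↑) : s → M), ?_, fun f hf => ?_⟩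
  · rw [← LinearMap.range_eq_top, Fintype.range_linearCombination, Subtype.range_coe]
    exact hspan
  · refine mem_jacobson_pi_of_forall_mem_jacobson fun x => mem_jacobson_of_not_isUnit fun hx => ?_
    rw [LinearMap.mem_ker, Fintype.linearCombination_apply] at hf
    have hmem : (x : M) ∈ Submodule.span A ((s : Set M) \ {(x : M)}) := by
      have himage : ((↑) : s → M) '' {x}ᶜ = (s : Set M) \ {(x : M)} := by
        rw [Set.compl_eq_univ_sdiff, Set.image_sdiff Subtype.val_injective, Set.image_univ,
          Subtype.range_coe, Set.image_singleton]
      exact himage ▸ mem_span_image_compl_of_isUnit hf hx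
    have hspan' : Submodule.span A ((s : Set M) \ {(x : M)}) = ⊤ := by
      rw [← Submodule.span_insert_eq_span hmem, Set.insert_sdiff_singleton,
        Set.insert_eq_of_mem (Finset.mem_coe.mpr x.2), hspan]
    have hle : s.card ≤ ((s : Set M) \ {(x : M)}).ncard := by
      rw [hcard, ← hspan']
      exact Submodule.spanFinrank_span_le_ncard_of_finite (s.finite_toSet.sdiff)
    have hlt := Set.ncard_sdiff_singleton_lt_of_mem (Finset.mem_coe.mpr x.2) s.finite_toSet
    rw [Set.ncard_coe_finset] at hlt
    exact hle.not_gt hlt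

theorem injective_of_ker_le_jacobson [IsCoatomic (Submodule A M)] [Module.Projective A P]
    {L : M →ₗ[A] P} (hL : Function.Surjective L) (hker : LinearMap.ker L ≤ Module.jacobson A M) :
    Function.Injective L := by
  obtain ⟨σ, hσ⟩ := Module.projective_lifting_property L LinearMap.id hL
  have hLσ (x : P) : L (σ x) = x := LinearMap.congr_fun hσ x
  have hsup : LinearMap.range σ ⊔ LinearMap.ker L = ⊤ := by
    refine eq_top_iff.mpr fun m _ => Submodule.mem_sup.mpr
      ⟨σ (L m), ⟨L m, rfl⟩, m - σ (L m), ?_, add_sub_cancel _ _⟩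
    rw [LinearMap.mem_ker, map_sub, hLσ, sub_self]
  have hrange : LinearMap.range σ = ⊤ := by
    refine (eq_top_or_exists_le_coatom _).resolve_right fun ⟨N, hN, hσN⟩ => hN.ne_top ?_
    exact top_unique (hsup.ge.trans (sup_le hσN (hker.trans (sInf_le hN))))
  exact (Function.LeftInverse.rightInverse_of_surjective hLσ
    (LinearMap.range_eq_top.mp hrange)).injective

theorem free_of_projective_of_isLocalRing [IsLocalRing A] [Module.Finite A P]
    [Module.Projective A P] : Module.Free A P := by
  obtain ⟨s, L, hL, hker⟩ := exists_surjective_ker_le_jacobson A P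
  exact .of_equiv (LinearEquiv.ofBijective L ⟨injective_of_ker_le_jacobson hL hker, hL⟩)

end ProjectiveOverLocal

section SimpleModules

theorem smul_eq_zero_of_mem_jacobson {R A S : Type*} [CommRing R] [Ring A] [Algebra R A]
    [Module.Finite R A] [AddCommGroup S] [Module R S] [Module A S] [IsScalarTower R A S]
    [IsSimpleModule A S] {r : R} (hr : r ∈ Ring.jacobson R) (s : S) : r • s = 0 := by
  have : Nontrivial S := IsSimpleModule.nontrivial A S
  have : Module.Finite R S := .trans A S
  have : SMulCommClass A R S := IsScalarTower.to_smulCommClass'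
  rcases LinearMap.bijective_or_eq_zero (r • (LinearMap.id : S →ₗ[A] S)) with hbij | hzero
  · have htop : (⊤ : Submodule R S) ≤ Ring.jacobson R • ⊤ := fun x _ => by
      obtain ⟨y, rfl⟩ := hbij.surjective x
      exact Submodule.smul_mem_smul hr Submodule.mem_top
    exact absurd (Module.Finite.fg_top.eq_bot_of_le_jacobson_smul htop) top_ne_bot
  · exact LinearMap.congr_fun hzero s

theorem smul_mem_closure_orbit {G V : Type*} [Group G] [AddGroup V] [DistribMulAction G V]
    {v x : V} (g : G) (hx : x ∈ AddSubgroup.closure (MulAction.orbit G v)) :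
    g • x ∈ AddSubgroup.closure (MulAction.orbit G v) := by
  have hle : AddSubgroup.closure (MulAction.orbit G v) ≤
      (AddSubgroup.closure (MulAction.orbit G v)).comap (DistribSMul.toAddMonoidHom V g) := by
    rw [AddSubgroup.closure_le]
    rintro _ ⟨h, rfl⟩
    exact AddSubgroup.subset_closure ⟨g * h, mul_smul g h v⟩
  exact hle hx

theorem smul_eq_counit_smul_of_forall_of_smul_eq {R G S : Type*} [CommSemiring R] [Monoid G]
    [AddCommMonoid S] [Module R S] [Module (MonoidAlgebra R G) S]
    [IsScalarTower R (MonoidAlgebra R G) S] {s : S}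
    (hs : ∀ g : G, MonoidAlgebra.of R G g • s = s) (a : MonoidAlgebra R G) :
    a • s = Coalgebra.counit (R := R) a • s := by
  induction a using MonoidAlgebra.induction_on with
  | of g => rw [hs, MonoidAlgebra.of_apply, MonoidAlgebra.counit_single, CommSemiring.counit_apply,
      one_smul]
  | add a b ha hb => rw [add_smul, ha, hb, map_add, add_smul]
  | smul r a ha => rw [smul_assoc, ha, map_smul, smul_assoc]

variable {p : ℕ} [Fact p.Prime] {G : Type*} [Group G] [Finite G]

theorem exists_ne_zero_forall_smul_eq (hG : IsPGroup p G) {V : Type*} [AddCommGroup V]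
    [DistribMulAction G V] [Nontrivial V] (hV : ∀ v : V, p • v = 0) :
    ∃ v : V, v ≠ 0 ∧ ∀ g : G, g • v = v := by
  obtain ⟨v, hv⟩ := exists_ne (0 : V)
  let T : AddSubgroup V := AddSubgroup.closure (MulAction.orbit G v)
  have hT (t : T) : p • t = 0 := Subtype.ext (hV t)
  have : Finite (MulAction.orbit G v) := Set.finite_range fun g : G => g • v
  have : AddGroup.FG T := AddGroup.closure_finite_fg _
  have : Finite T := AddCommGroup.finite_of_fg_isAddTorsion T fun t =>
    isOfFinAddOrder_iff_nsmul_eq_zero.mpr ⟨p, (Fact.out : p.Prime).pos, hT t⟩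
  have hpT : p ∣ Nat.card T := by
    have hvT : v ∈ T := AddSubgroup.subset_closure (MulAction.mem_orbit_self v)
    rw [← addOrderOf_eq_prime (hT ⟨v, hvT⟩) fun h => hv (congrArg Subtype.val h)]
    exact addOrderOf_dvd_natCard _
  let T' : SubMulAction G V := ⟨T, fun g _ hx => smul_mem_closure_orbit g hx⟩
  have : Finite T' := ‹Finite T›
  obtain ⟨t, ht, h0t⟩ := hG.exists_fixed_point_of_prime_dvd_card_of_fixed_point T' hpT
    (a := ⟨0, T.zero_mem⟩) fun g => Subtype.ext (smul_zero g)
  exact ⟨t, fun h => h0t (Subtype.ext h.symm), fun g => congrArg Subtype.val (ht g)⟩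

variable {R : Type*} [CommRing R]

theorem smul_eq_counit_smul_of_isSimpleModule (hG : IsPGroup p G)
    (hp : (p : R) ∈ Ring.jacobson R) {S : Type*} [AddCommGroup S] [Module R S]
    [Module (MonoidAlgebra R G) S] [IsScalarTower R (MonoidAlgebra R G) S]
    [IsSimpleModule (MonoidAlgebra R G) S] (a : MonoidAlgebra R G) (s : S) :
    a • s = Coalgebra.counit (R := R) a • s := by
  have : Nontrivial S := IsSimpleModule.nontrivial (MonoidAlgebra R G) S
  let _ : DistribMulAction G S := DistribMulAction.compHom S (MonoidAlgebra.of R G)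
  have hpS (s : S) : p • s = 0 := by
    rw [← Nat.cast_smul_eq_nsmul R]
    exact smul_eq_zero_of_mem_jacobson (A := MonoidAlgebra R G) hp s
  obtain ⟨t, ht, hfix⟩ := exists_ne_zero_forall_smul_eq hG hpS
  have hcounit := smul_eq_counit_smul_of_forall_of_smul_eq (R := R) hfix
  obtain ⟨b, rfl⟩ := IsSimpleModule.toSpanSingleton_surjective (MonoidAlgebra R G) ht s
  rw [LinearMap.toSpanSingleton_apply, ← mul_smul, hcounit, Bialgebra.counit_mul, mul_smul,
    hcounit b]

theorem exists_mul_eq_one_of_isUnit_counit (hG : IsPGroup p G)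
    (hp : (p : R) ∈ Ring.jacobson R) {a : MonoidAlgebra R G}
    (ha : IsUnit (Coalgebra.counit (R := R) a)) : ∃ b, b * a = 1 := by
  rw [← Ideal.mem_span_singleton', ← Ideal.eq_top_iff_one]
  by_contra hne
  obtain ⟨M, hM, haM⟩ := Ideal.exists_le_maximal _ hne
  have : IsSimpleModule (MonoidAlgebra R G) (MonoidAlgebra R G ⧸ M) :=
    isSimpleModule_iff_isCoatom.mpr hM.out
  have hzero : a • (Submodule.Quotient.mk 1 : MonoidAlgebra R G ⧸ M) = 0 := by
    rw [← Submodule.Quotient.mk_smul, smul_eq_mul, mul_one, Submodule.Quotient.mk_eq_zero]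
    exact haM (Ideal.mem_span_singleton_self a)
  rw [smul_eq_counit_smul_of_isSimpleModule hG hp, ha.smul_eq_zero,
    Submodule.Quotient.mk_eq_zero] at hzero
  exact hM.ne_top ((Ideal.eq_top_iff_one M).mpr hzero)

theorem isLocalHom_counitAlgHom (hG : IsPGroup p G) (hp : (p : R) ∈ Ring.jacobson R) :
    IsLocalHom (Bialgebra.counitAlgHom R (MonoidAlgebra R G)) where
  map_nonunit a ha := by
    obtain ⟨b, hba⟩ := exists_mul_eq_one_of_isUnit_counit hG hp ha
    have hb : IsUnit (Coalgebra.counit (R := R) b) :=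
      .of_mul_eq_one (Coalgebra.counit a) <| by
        rw [← Bialgebra.counit_mul, hba, Bialgebra.counit_one]
    obtain ⟨c, hcb⟩ := exists_mul_eq_one_of_isUnit_counit hG hp hb
    have hca : c = a := left_inv_eq_right_inv hcb hba
    exact ⟨⟨a, b, hca ▸ hcb, hba⟩, rfl⟩

end SimpleModules

theorem projective_monoidAlgebra_restrictScalars_free_general {Λ : Type*} [CommRing Λ]
    [IsLocalRing Λ] {p : ℕ} [Fact p.Prime] [CharP (IsLocalRing.ResidueField Λ) p]
    {G : Type*} [Group G] [Finite G] (hG : IsPGroup p G)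
    (P : Type*) [AddCommGroup P] [Module (MonoidAlgebra Λ G) P]
    [Module.Finite (MonoidAlgebra Λ G) P] [Module.Projective (MonoidAlgebra Λ G) P]
    [Module Λ P] [IsScalarTower Λ (MonoidAlgebra Λ G) P] :
    Module.Free Λ P ∧ ∃ n : ℕ, Module.finrank Λ P = Nat.card G * n := by
  have hp : (p : Λ) ∈ Ring.jacobson Λ := by
    rw [IsLocalRing.ringJacobson_eq_maximalIdeal, ← IsLocalRing.residue_eq_zero_iff, map_natCast,
      CharP.cast_eq_zero]
  have := isLocalHom_counitAlgHom hG hp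
  have : IsLocalRing (MonoidAlgebra Λ G) :=
    (Bialgebra.counitAlgHom Λ (MonoidAlgebra Λ G) : MonoidAlgebra Λ G →+* Λ).domain_isLocalRing
  have : Module.Free (MonoidAlgebra Λ G) P := free_of_projective_of_isLocalRing
  let b := (MonoidAlgebra.basis G Λ).smulTower (Module.Free.chooseBasis (MonoidAlgebra Λ G) P)
  exact ⟨.of_basis b, _, by rw [Module.finrank_eq_nat_card_basis b, Nat.card_prod]⟩

/-- If `Λ` is a complete noetherian local (commutative) ring whose residue field
has characteristic `p > 0`, `G` is a finite `p`-group, and `P` is a finitely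
generated projective module over the group algebra `Λ[G]`, then `P`, regarded as
a `Λ`-module by restriction of scalars along `Λ → Λ[G]`, is a free `Λ`-module
whose rank is divisible by the order of `G`. -/
theorem projective_monoidAlgebra_restrictScalars_free (Λ : Type u) [CommRing Λ]
    [IsLocalRing Λ] [IsNoetherianRing Λ] [IsAdicComplete (IsLocalRing.maximalIdeal Λ) Λ]
    (p : ℕ) [Fact p.Prime] [CharP (IsLocalRing.ResidueField Λ) p]
    (G : Type u) [Group G] [Finite G] (hG : IsPGroup p G)
    (P : Type v) [AddCommGroup P] [Module (MonoidAlgebra Λ G) P]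
    [Module.Finite (MonoidAlgebra Λ G) P] [Module.Projective (MonoidAlgebra Λ G) P]
    [Module Λ P] [IsScalarTower Λ (MonoidAlgebra Λ G) P] :
    Module.Free Λ P ∧ ∃ n : ℕ, Module.finrank Λ P = Nat.card G * n :=
  projective_monoidAlgebra_restrictScalars_free_general hG P
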